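/- arXiv:2508.07400 — 6 statements merged into one kernel-verified Lean document; each statement's English description precedes it below -/
import Mathlib

section
/- Let π be a positive policy, and let ν : {0,…,H} × S → ℝ satisfy ν_H(s) = 0 for all s ∈ S. Define the time-varying reward r by r_t(s,a) = log π_t(a|s) − γ · Σ_{s'∈S} T(s'|s,a) ν_{t+1}(s') + ν_t(s) for all t ∈ {0,…,H−1}, s ∈ S, a ∈ A. Then the soft Q-functions of r satisfy Q_t(s,a) = log π_t(a|s) + ν_t(s) for all t, s, a; consequently the soft value functions satisfy V_t(s) = ν_t(s) for all 0 ≤ t ≤ H−1 and all s, and the soft-optimal policy of r equals π (i.e., r induces π with soft value functions ν). -/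
/-- Soft Q-function computed backward in time, indexed by the number of steps
remaining before the final time `H - 1`: `Qaux T γ H r k` is the soft
Q-function at time `t = H - 1 - k`. -/
noncomputable def Qaux {S A : Type*} [Fintype S] [Fintype A]
    (T : S → A → S → ℝ) (γ : ℝ) (H : ℕ) (r : ℕ → S → A → ℝ) : ℕ → S → A → ℝ
  | 0 => fun s a => r (H - 1) s a
  | (k + 1) => fun s a => r (H - 1 - (k + 1)) s a +
      γ * ∑ s' : S, T s a s' *
        Real.log (∑ a' : A, Real.exp (Qaux T γ H r k s' a'))

/-- The soft Q-function at time `t` (meaningful for `t ≤ H - 1`). -/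
noncomputable def softQ {S A : Type*} [Fintype S] [Fintype A]
    (T : S → A → S → ℝ) (γ : ℝ) (H : ℕ) (r : ℕ → S → A → ℝ)
    (t : ℕ) : S → A → ℝ :=
  Qaux T γ H r (H - 1 - t)

/-- The soft value function `V_t(s) = log Σ_a exp Q_t(s,a)`. -/
noncomputable def softV {S A : Type*} [Fintype S] [Fintype A]
    (T : S → A → S → ℝ) (γ : ℝ) (H : ℕ) (r : ℕ → S → A → ℝ)
    (t : ℕ) (s : S) : ℝ :=
  Real.log (∑ a : A, Real.exp (softQ T γ H r t s a))

/-- The soft-optimal (maximum-entropy) policy of the reward `r`. -/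
noncomputable def softPolicy {S A : Type*} [Fintype S] [Fintype A]
    (T : S → A → S → ℝ) (γ : ℝ) (H : ℕ) (r : ℕ → S → A → ℝ)
    (t : ℕ) (s : S) (a : A) : ℝ :=
  Real.exp (softQ T γ H r t s a) / ∑ a' : A, Real.exp (softQ T γ H r t s a')

/-!
The soft Bellman system `Q_t = r_t + γ T V_{t+1}`, `V_t = log ∑ₐ exp Q_t` with terminal condition
`V_H = 0` determines `Q` and `V` by backward induction. The formula for `r` says exactly that
`Q_t = log π_t + ν_t`, `V_t = ν_t` solve it: the first equation is the formula rearranged, and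
the second holds because `π_t` is normalized. The soft-optimal policy is `exp (Q_t - V_t)`,
which for this solution is `π_t`.
-/

theorem log_sum_exp_log_add {ι : Type*} {s : Finset ι} {p : ι → ℝ} (hs : s.Nonempty)
    (hp : ∀ i ∈ s, 0 < p i) (c : ℝ) :
    Real.log (∑ i ∈ s, Real.exp (Real.log (p i) + c)) = Real.log (∑ i ∈ s, p i) + c := by
  have hsum : ∑ i ∈ s, Real.exp (Real.log (p i) + c) = (∑ i ∈ s, p i) * Real.exp c := by
    rw [Finset.sum_mul]
    exact Finset.sum_congr rfl fun i hi => by rw [Real.exp_add, Real.exp_log (hp i hi)]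
  rw [hsum, Real.log_mul (Finset.sum_pos hp hs).ne' (Real.exp_ne_zero c), Real.log_exp]

section SoftBellman

variable {S A : Type*} [Fintype S] [Fintype A]

/-- The finite-horizon soft Bellman system for the reward `r`, whose unknowns are the action values
`Q` and the state values `V`; it characterizes the soft Q-functions and soft value functions of `r`.
The last step is not a separate case: it is covered by the terminal condition `V_H = 0`. -/
structure IsSoftBellmanSolution (T : S → A → S → ℝ) (γ : ℝ) (H : ℕ) (r Q : ℕ → S → A → ℝ)
    (V : ℕ → S → ℝ) : Prop where
  terminal : ∀ s, V H s = 0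
  stateValue : ∀ t < H, ∀ s, V t s = Real.log (∑ a, Real.exp (Q t s a))
  actionValue : ∀ t < H, ∀ s a, Q t s a = r t s a + γ * ∑ s', T s a s' * V (t + 1) s'

variable {T : S → A → S → ℝ} {γ : ℝ} {H : ℕ} {r : ℕ → S → A → ℝ}

theorem softQ_last (s : S) (a : A) : softQ T γ H r (H - 1) s a = r (H - 1) s a := by
  rw [softQ, Nat.sub_self, Qaux]

theorem softQ_eq_add_softV_succ {t : ℕ} (ht : t + 1 < H) (s : S) (a : A) :
    softQ T γ H r t s a = r t s a + γ * ∑ s', T s a s' * softV T γ H r (t + 1) s' := by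
  have hsteps : H - 1 - t = H - 1 - (t + 1) + 1 := by omega
  have htime : H - 1 - (H - 1 - (t + 1) + 1) = t := by omega
  simp only [softV, softQ, hsteps, Qaux, htime]

theorem softPolicy_eq_exp_sub (t : ℕ) (s : S) (a : A) :
    softPolicy T γ H r t s a = Real.exp (softQ T γ H r t s a - softV T γ H r t s) := by
  have hpos : 0 < ∑ a', Real.exp (softQ T γ H r t s a') :=
    Finset.sum_pos (fun _ _ => Real.exp_pos _) ⟨a, Finset.mem_univ a⟩
  rw [softPolicy, softV, Real.exp_sub, Real.exp_log hpos]

namespace IsSoftBellmanSolution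

variable {Q : ℕ → S → A → ℝ} {V : ℕ → S → ℝ}

theorem softV_eq_of_softQ_eq (h : IsSoftBellmanSolution T γ H r Q V) {t : ℕ} (ht : t < H) {s : S}
    (hQ : ∀ a, softQ T γ H r t s a = Q t s a) : softV T γ H r t s = V t s := by
  simp only [softV, hQ, h.stateValue t ht]

theorem softQ_eq (h : IsSoftBellmanSolution T γ H r Q V) {t : ℕ} (ht : t < H) :
    ∀ s a, softQ T γ H r t s a = Q t s a := by
  refine Nat.decreasingInduction' (P := fun t => ∀ s a, softQ T γ H r t s a = Q t s a)
    (fun t htlast _ ih s a => ?_) (Nat.le_sub_one_of_lt ht) (fun s a => ?_)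
  · have hsucc : t + 1 < H := by omega
    have hV (s' : S) : softV T γ H r (t + 1) s' = V (t + 1) s' :=
      h.softV_eq_of_softQ_eq hsucc (ih s')
    simp only [softQ_eq_add_softV_succ hsucc, hV, h.actionValue t (Nat.lt_of_succ_lt hsucc)]
  · have hlast : H - 1 + 1 = H := by omega
    simp only [softQ_last, h.actionValue (H - 1) (by omega), hlast, h.terminal, mul_zero,
      Finset.sum_const_zero, add_zero]

theorem softV_eq (h : IsSoftBellmanSolution T γ H r Q V) {t : ℕ} (ht : t < H) (s : S) :
    softV T γ H r t s = V t s :=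
  h.softV_eq_of_softQ_eq ht (h.softQ_eq ht s)

theorem softPolicy_eq (h : IsSoftBellmanSolution T γ H r Q V) {t : ℕ} (ht : t < H) (s : S)
    (a : A) : softPolicy T γ H r t s a = Real.exp (Q t s a - V t s) := by
  rw [softPolicy_eq_exp_sub, h.softQ_eq ht, h.softV_eq ht]

end IsSoftBellmanSolution

theorem isSoftBellmanSolution_log_add {π : ℕ → S → A → ℝ} {ν : ℕ → S → ℝ}
    (hπpos : ∀ t < H, ∀ s a, 0 < π t s a) (hπsum : ∀ t < H, ∀ s, ∑ a, π t s a = 1)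
    (hνH : ∀ s, ν H s = 0)
    (hr : ∀ t < H, ∀ s a,
      r t s a = Real.log (π t s a) - γ * (∑ s', T s a s' * ν (t + 1) s') + ν t s) :
    IsSoftBellmanSolution T γ H r (fun t s a => Real.log (π t s a) + ν t s) ν where
  terminal := hνH
  stateValue t ht s := by
    have hA : (Finset.univ : Finset A).Nonempty :=
      Finset.nonempty_of_sum_ne_zero ((hπsum t ht s).trans_ne one_ne_zero)
    rw [log_sum_exp_log_add hA fun a _ => hπpos t ht s a, hπsum t ht s, Real.log_one, zero_add]
  actionValue t ht s a := by
    rw [hr t ht s a]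
    ring

end SoftBellman

theorem stmt0_general {S A : Type*} [Fintype S] [Fintype A]
    (T : S → A → S → ℝ) (γ : ℝ) (H : ℕ)
    (π : ℕ → S → A → ℝ)
    (hπpos : ∀ t < H, ∀ s a, 0 < π t s a)
    (hπsum : ∀ t < H, ∀ s, ∑ a : A, π t s a = 1)
    (ν : ℕ → S → ℝ) (hνH : ∀ s, ν H s = 0)
    (r : ℕ → S → A → ℝ)
    (hr : ∀ t < H, ∀ s a,
      r t s a = Real.log (π t s a)
        - γ * (∑ s' : S, T s a s' * ν (t + 1) s') + ν t s) :
    (∀ t < H, ∀ s a, softQ T γ H r t s a = Real.log (π t s a) + ν t s) ∧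
    (∀ t < H, ∀ s, softV T γ H r t s = ν t s) ∧
    (∀ t < H, ∀ s a, softPolicy T γ H r t s a = π t s a) := by
  have hsol := isSoftBellmanSolution_log_add hπpos hπsum hνH hr
  refine ⟨fun t ht => hsol.softQ_eq ht, fun t ht => hsol.softV_eq ht, fun t ht s a => ?_⟩
  rw [hsol.softPolicy_eq ht, add_sub_cancel_right, Real.exp_log (hπpos t ht s a)]

/-- if `r_t(s,a) = log π_t(a|s) − γ Σ_{s'} T(s'|s,a) ν_{t+1}(s') + ν_t(s)`
with `ν_H ≡ 0`, then the soft Q-functions of `r` satisfy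
`Q_t(s,a) = log π_t(a|s) + ν_t(s)`, the soft value functions satisfy `V_t = ν_t`,
and the soft-optimal policy of `r` equals `π`. -/
theorem stmt0 {S A : Type*} [Fintype S] [Fintype A] [Nonempty S] [Nonempty A]
    (T : S → A → S → ℝ) (γ : ℝ) (H : ℕ)
    (hT : ∀ s a s', 0 ≤ T s a s') (hTsum : ∀ s a, ∑ s' : S, T s a s' = 1)
    (hγ0 : 0 ≤ γ) (hγ1 : γ ≤ 1) (hH : 1 ≤ H)
    (π : ℕ → S → A → ℝ)
    (hπpos : ∀ t < H, ∀ s a, 0 < π t s a)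
    (hπsum : ∀ t < H, ∀ s, ∑ a : A, π t s a = 1)
    (ν : ℕ → S → ℝ) (hνH : ∀ s, ν H s = 0)
    (r : ℕ → S → A → ℝ)
    (hr : ∀ t < H, ∀ s a,
      r t s a = Real.log (π t s a)
        - γ * (∑ s' : S, T s a s' * ν (t + 1) s') + ν t s) :
    (∀ t < H, ∀ s a, softQ T γ H r t s a = Real.log (π t s a) + ν t s) ∧
    (∀ t < H, ∀ s, softV T γ H r t s = ν t s) ∧
    (∀ t < H, ∀ s a, softPolicy T γ H r t s a = π t s a) :=
  stmt0_general T γ H π hπpos hπsum ν hνH r hr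
end

section
/- Let π be a positive policy and 0 ≤ i < j ≤ H. If there exists some ν_o : S → ℝ for which a time-invariant certificate on [i,j) with terminal value ν_o exists, then for every ν'_o : S → ℝ there exists a time-invariant certificate on [i,j) with terminal value ν'_o. Equivalently, the set of time-invariant certificates on [i,j) with terminal value ν_o is empty for some ν_o if and only if it is empty for all ν_o. (Lemma 2 of the paper.) -/
/-- A time-invariant certificate on `[i,j)` with terminal value `νo` for the
policy `π`: a pair `(r, ν)` with `r : S × A → ℝ` and `ν` defined on
`{i,…,j} × S` such that `ν_j = νo` and, for all `i ≤ t < j`, `s`, `a`,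
`r(s,a) = log π_t(a|s) − γ Σ_{s'} T(s'|s,a) ν_{t+1}(s') + ν_t(s)`. -/
def IsCert {S A : Type*} [Fintype S] (T : S → A → S → ℝ) (γ : ℝ)
    (π : ℕ → S → A → ℝ) (i j : ℕ) (νo : S → ℝ)
    (r : S → A → ℝ) (ν : ℕ → S → ℝ) : Prop :=
  (∀ s, ν j s = νo s) ∧
  ∀ t, i ≤ t → t < j → ∀ s a,
    r s a = Real.log (π t s a)
      - γ * (∑ s' : S, T s a s' * ν (t + 1) s') + ν t s

/-- The interval `[i,j)` is feasible for `π` if a time-invariant certificate on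
`[i,j)` exists with some terminal value. -/
def Feasible {S A : Type*} [Fintype S] (T : S → A → S → ℝ) (γ : ℝ)
    (π : ℕ → S → A → ℝ) (i j : ℕ) : Prop :=
  ∃ (νo : S → ℝ) (r : S → A → ℝ) (ν : ℕ → S → ℝ), IsCert T γ π i j νo r ν

/-- Potential-based shaping of the reward `r` by `δ`: the reward that absorbs the time-independent
shift `ν_t ↦ ν_t + δ` of a certificate. In the usual sign convention `r + γ 𝔼[Φ(s')] - Φ(s)`, the
potential is `Φ = -δ`. -/
def shapedReward {S A : Type*} [Fintype S] (T : S → A → S → ℝ) (γ : ℝ) (δ : S → ℝ)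
    (r : S → A → ℝ) : S → A → ℝ :=
  fun s a => r s a - γ * (∑ s', T s a s' * δ s') + δ s

section

variable {S A : Type*} [Fintype S] {T : S → A → S → ℝ} {γ : ℝ} {π : ℕ → S → A → ℝ}
  {i j : ℕ} {νo : S → ℝ} {r : S → A → ℝ} {ν : ℕ → S → ℝ}

theorem IsCert.add_const (h : IsCert T γ π i j νo r ν) (δ : S → ℝ) :
    IsCert T γ π i j (νo + δ) (shapedReward T γ δ r) (fun t => ν t + δ) := by
  obtain ⟨hterminal, hreward⟩ := h
  refine ⟨fun s => congrArg (· + δ s) (hterminal s), fun t hit htj s a => ?_⟩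
  have sum_add : ∑ s', T s a s' * (ν (t + 1) + δ) s' =
      (∑ s', T s a s' * ν (t + 1) s') + ∑ s', T s a s' * δ s' :=
    dotProduct_add (T s a) (ν (t + 1)) δ
  rw [shapedReward, hreward t hit htj s a, sum_add]
  simp only [Pi.add_apply]
  ring

theorem IsCert.exists_isCert (h : IsCert T γ π i j νo r ν) (νo' : S → ℝ) :
    ∃ (r' : S → A → ℝ) (ν' : ℕ → S → ℝ), IsCert T γ π i j νo' r' ν' := by
  have hshift := h.add_const (νo' - νo)
  rw [add_sub_cancel] at hshift
  exact ⟨_, _, hshift⟩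

end

theorem stmt6_general {S A : Type*} [Fintype S] (T : S → A → S → ℝ) (γ : ℝ)
    (π : ℕ → S → A → ℝ) (i j : ℕ) (νo νo' : S → ℝ) :
    (∃ (r : S → A → ℝ) (ν : ℕ → S → ℝ), IsCert T γ π i j νo r ν) ↔
      ∃ (r : S → A → ℝ) (ν : ℕ → S → ℝ), IsCert T γ π i j νo' r ν :=
  ⟨fun ⟨_, _, h⟩ => h.exists_isCert νo', fun ⟨_, _, h⟩ => h.exists_isCert νo⟩

/-- Lemma 2: if a time-invariant certificate on `[i,j)` exists for
some terminal value, then one exists for every terminal value; equivalently,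
the certificate set is empty for some terminal value iff it is empty for all. -/
theorem stmt6 {S A : Type*} [Fintype S] [Fintype A] [Nonempty S] [Nonempty A]
    (T : S → A → S → ℝ) (γ : ℝ) (H : ℕ)
    (hT : ∀ s a s', 0 ≤ T s a s') (hTsum : ∀ s a, ∑ s' : S, T s a s' = 1)
    (hγ0 : 0 ≤ γ) (hγ1 : γ ≤ 1) (hH : 1 ≤ H)
    (π : ℕ → S → A → ℝ)
    (hπpos : ∀ t < H, ∀ s a, 0 < π t s a)
    (hπsum : ∀ t < H, ∀ s, ∑ a : A, π t s a = 1)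
    (i j : ℕ) (hij : i < j) (hjH : j ≤ H) :
    ((∃ (νo : S → ℝ) (r : S → A → ℝ) (ν : ℕ → S → ℝ), IsCert T γ π i j νo r ν) →
      ∀ νo' : S → ℝ, ∃ (r : S → A → ℝ) (ν : ℕ → S → ℝ), IsCert T γ π i j νo' r ν) ∧
    ((∃ νo : S → ℝ, ¬ ∃ (r : S → A → ℝ) (ν : ℕ → S → ℝ), IsCert T γ π i j νo r ν) ↔
      ∀ νo : S → ℝ, ¬ ∃ (r : S → A → ℝ) (ν : ℕ → S → ℝ), IsCert T γ π i j νo r ν) := by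
  have hiff := stmt6_general T γ π i j
  exact ⟨fun ⟨νo, h⟩ νo' => (hiff νo νo').mp h,
    fun ⟨νo, h⟩ νo' => mt (hiff νo' νo).mp h, fun h => ⟨0, h 0⟩⟩
end

section
/- Let π be a positive policy and let g be its greedy switch sequence. Let k ≥ 1 and s : {0,…,k} → ℕ satisfy s_0 = H, s_{i+1} < s_i for all i < k, and: the interval [s_{i+1}, s_i) is feasible for π for every i < k. Then g(i) ≤ s(i) for all 0 ≤ i ≤ k. (Lemma 3 of the paper: the greedy switch times are pointwise no later, counted backward from the horizon, than those of any feasible switch-time sequence.) -/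
/-- The greedy switch sequence of `π`: `g 0 = H`; if `g i = 0` then `g (i+1) = 0`,
otherwise `g (i+1)` is the least `t` such that `[t, g i)` is feasible for `π`. -/
noncomputable def greedy {S A : Type*} [Fintype S] (T : S → A → S → ℝ) (γ : ℝ)
    (π : ℕ → S → A → ℝ) (H : ℕ) : ℕ → ℕ
  | 0 => H
  | (i + 1) =>
      if greedy T γ π H i = 0 then 0
      else sInf {t | Feasible T γ π t (greedy T γ π H i)}

section

variable {S A : Type*} [Fintype S] {T : S → A → S → ℝ} {γ : ℝ} {π : ℕ → S → A → ℝ}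

theorem IsCert.mono {i i' j j' : ℕ} {νo : S → ℝ} {r : S → A → ℝ} {ν : ℕ → S → ℝ}
    (h : IsCert T γ π i j νo r ν) (hi : i ≤ i') (hj : j' ≤ j) :
    IsCert T γ π i' j' (ν j') r ν :=
  ⟨fun _ => rfl, fun t hit htj => h.2 t (hi.trans hit) (htj.trans_le hj)⟩

theorem Feasible.mono {i i' j j' : ℕ} (h : Feasible T γ π i j) (hi : i ≤ i') (hj : j' ≤ j) :
    Feasible T γ π i' j' :=
  let ⟨_, r, ν, hcert⟩ := h
  ⟨ν j', r, ν, hcert.mono hi hj⟩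

theorem greedy_succ_le_of_feasible {H i t : ℕ} (h : Feasible T γ π t (greedy T γ π H i)) :
    greedy T γ π H (i + 1) ≤ t := by
  rw [greedy]
  split_ifs
  · exact Nat.zero_le t
  · exact Nat.sInf_le h

theorem stmt9_general {H k : ℕ} {s : ℕ → ℕ} (hs0 : H ≤ s 0)
    (hfeas : ∀ i < k, Feasible T γ π (s (i + 1)) (s i)) :
    ∀ i ≤ k, greedy T γ π H i ≤ s i := by
  intro i
  induction i with
  | zero => exact fun _ => hs0
  | succ i ih =>
    intro hi
    have hle : greedy T γ π H i ≤ s i := ih (Nat.le_of_succ_le hi)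
    -- `s (i + 1)` may exceed `greedy T γ π H i`; the interval is then empty, hence feasible.
    have hsub : Feasible T γ π (s (i + 1)) (greedy T γ π H i) := (hfeas i hi).mono le_rfl hle
    exact greedy_succ_le_of_feasible hsub

end

/-- Lemma 3: the greedy switch times are pointwise no later
(counted backward from the horizon) than those of any feasible switch sequence. -/
theorem stmt9 {S A : Type*} [Fintype S] [Fintype A] [Nonempty S] [Nonempty A]
    (T : S → A → S → ℝ) (γ : ℝ) (H : ℕ)
    (hT : ∀ s a s', 0 ≤ T s a s') (hTsum : ∀ s a, ∑ s' : S, T s a s' = 1)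
    (hγ0 : 0 ≤ γ) (hγ1 : γ ≤ 1) (hH : 1 ≤ H)
    (π : ℕ → S → A → ℝ)
    (hπpos : ∀ t < H, ∀ s a, 0 < π t s a)
    (hπsum : ∀ t < H, ∀ s, ∑ a : A, π t s a = 1)
    (k : ℕ) (hk : 1 ≤ k) (s : ℕ → ℕ)
    (hs0 : s 0 = H)
    (hdec : ∀ i < k, s (i + 1) < s i)
    (hfeas : ∀ i < k, Feasible T γ π (s (i + 1)) (s i)) :
    ∀ i ≤ k, greedy T γ π H i ≤ s i :=
  stmt9_general hs0.ge hfeas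
end

section
/- Let π be a positive policy and let g be its greedy switch sequence, and let k* be the least index i with g(i) = 0 (which exists and satisfies k* ≤ H). Then: (a) the greedy intervals [g(i+1), g(i)) for 0 ≤ i < k* form a partition of {0,…,H−1} into k* intervals each of which is feasible for π; and (b) for every k ≥ 1 and every s : {0,…,k} → ℕ with s_0 = H, s_k = 0, s_{i+1} < s_i for all i < k, and [s_{i+1}, s_i) feasible for π for every i < k, one has k ≥ k*. Hence the greedy partition uses the minimum possible number of feasible intervals, i.e., it corresponds to a reward inducing π with the minimum number of switches. (Optimality claim of Theorem 1.) -/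
/-!
Restricting a certificate to an initial segment of its interval gives a certificate, so feasibility
of `[i, j)` is antitone in `j`. By induction the greedy sequence therefore stays below every switch
sequence with feasible intervals: if `g i ≤ s i`, then `[s (i + 1), g i)` is feasible, so the least
choice satisfies `g (i + 1) ≤ s (i + 1)`. Hence `g` reaches `0` first. Comparing with the partition
into unit intervals, `s i = H - i`, shows that it reaches `0` within `H` steps.
-/

/-- `g` is a greedy switch sequence from `H` for the interval predicate `F`, where `F i j` says that
`[i, j)` is admissible: from `g i ≠ 0` it jumps to the least left endpoint of an admissible interval
ending at `g i`, and it stays at `0` once there. -/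
structure IsGreedySwitchSeq (F : ℕ → ℕ → Prop) (H : ℕ) (g : ℕ → ℕ) : Prop where
  zero : g 0 = H
  succ_of_eq_zero : ∀ {i}, g i = 0 → g (i + 1) = 0
  isLeast_succ : ∀ {i}, g i ≠ 0 → IsLeast {t | F t (g i)} (g (i + 1))

namespace IsGreedySwitchSeq

variable {F : ℕ → ℕ → Prop} {H : ℕ} {g : ℕ → ℕ}

theorem succ_lt (hg : IsGreedySwitchSeq F H g) (hunit : ∀ i, F i (i + 1)) {i : ℕ}
    (hi : g i ≠ 0) : g (i + 1) < g i := by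
  have hpred : F (g i - 1) (g i) := by
    simpa only [Nat.sub_one_add_one hi] using hunit (g i - 1)
  exact ((hg.isLeast_succ hi).2 hpred).trans_lt (Nat.sub_one_lt hi)

theorem apply_le_of_forall_rel (hg : IsGreedySwitchSeq F H g) (hanti : ∀ i, Antitone (F i))
    {s : ℕ → ℕ} {k : ℕ} (h0 : H ≤ s 0) (hs : ∀ i < k, F (s (i + 1)) (s i)) :
    g k ≤ s k := by
  induction k with
  | zero => exact hg.zero.trans_le h0
  | succ k ih =>
    have hle : g k ≤ s k := ih fun i hi => hs i (hi.trans k.lt_succ_self)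
    by_cases hk : g k = 0
    · exact (hg.succ_of_eq_zero hk).trans_le (Nat.zero_le _)
    · exact (hg.isLeast_succ hk).2 (hanti _ hle (hs k k.lt_succ_self))

theorem apply_horizon_eq_zero (hg : IsGreedySwitchSeq F H g) (hanti : ∀ i, Antitone (F i))
    (hunit : ∀ i, F i (i + 1)) : g H = 0 := by
  have hstep (i : ℕ) : F (H - (i + 1)) (H - i) :=
    hanti _ (by omega : H - i ≤ H - (i + 1) + 1) (hunit _)
  have hle : g H ≤ H - H :=
    hg.apply_le_of_forall_rel hanti (s := fun i => H - i) le_rfl fun i _ => hstep i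
  simpa only [Nat.sub_self, Nat.le_zero] using hle

end IsGreedySwitchSeq

section Feasible

variable {S A : Type*} [Fintype S] (T : S → A → S → ℝ) (γ : ℝ) (π : ℕ → S → A → ℝ)

theorem Feasible.antitone (i : ℕ) : Antitone (Feasible T γ π i) := by
  rintro j' j hj ⟨_, r, ν, -, hν⟩
  exact ⟨ν j', r, ν, fun _ => rfl, fun t hi ht => hν t hi (ht.trans_le hj)⟩

theorem feasible_succ (i : ℕ) : Feasible T γ π i (i + 1) := by
  refine ⟨0, fun s a => Real.log (π i s a), 0, fun _ => rfl, fun t hi ht s a => ?_⟩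
  obtain rfl : t = i := Nat.le_antisymm (Nat.le_of_lt_succ ht) hi
  simp

theorem isGreedySwitchSeq_greedy (H : ℕ) :
    IsGreedySwitchSeq (Feasible T γ π) H (greedy T γ π H) where
  zero := rfl
  succ_of_eq_zero hi := by rw [greedy, if_pos hi]
  isLeast_succ {i} hi := by
    have hne : {t | Feasible T γ π t (greedy T γ π H i)}.Nonempty := by
      obtain ⟨j, hj⟩ := Nat.exists_eq_succ_of_ne_zero hi
      exact ⟨j, hj ▸ feasible_succ T γ π j⟩
    rw [greedy, if_neg hi]
    exact ⟨Nat.sInf_mem hne, fun _ ht => Nat.sInf_le ht⟩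

end Feasible

theorem stmt10_general {F : ℕ → ℕ → Prop} {H : ℕ} {g : ℕ → ℕ}
    (hg : IsGreedySwitchSeq F H g) (hanti : ∀ i, Antitone (F i)) (hunit : ∀ i, F i (i + 1)) :
    ∃ kstar : ℕ, kstar ≤ H ∧ g kstar = 0 ∧ (∀ i < kstar, g i ≠ 0) ∧
      (∀ i < kstar, g (i + 1) < g i ∧ F (g (i + 1)) (g i)) ∧
      (∀ (k : ℕ) (s : ℕ → ℕ), s 0 = H → s k = 0 →
        (∀ i < k, F (s (i + 1)) (s i)) → kstar ≤ k) := by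
  classical
  have hH : g H = 0 := hg.apply_horizon_eq_zero hanti hunit
  have hex : ∃ i, g i = 0 := ⟨H, hH⟩
  have hpos : ∀ i < Nat.find hex, g i ≠ 0 := fun _ hi => Nat.find_min hex hi
  refine ⟨Nat.find hex, Nat.find_min' hex hH, Nat.find_spec hex, hpos,
    fun i hi => ⟨hg.succ_lt hunit (hpos i hi), (hg.isLeast_succ (hpos i hi)).1⟩, ?_⟩
  intro k s h0 hk hs
  have hle : g k ≤ s k := hg.apply_le_of_forall_rel hanti h0.ge hs
  exact Nat.find_min' hex (Nat.le_zero.mp (hle.trans_eq hk))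

/-- optimality claim of Theorem 1: the least index `k*` with
`g(k*) = 0` exists and satisfies `k* ≤ H`; (a) the greedy intervals
`[g(i+1), g(i))`, `i < k*`, partition `{0,…,H−1}` (they run from `H` down to `0`,
strictly decreasing) into `k*` intervals each feasible for `π`; (b) every
feasible switch sequence from `H` down to `0` with `k` intervals has `k ≥ k*`. -/
theorem stmt10 {S A : Type*} [Fintype S] [Fintype A] [Nonempty S] [Nonempty A]
    (T : S → A → S → ℝ) (γ : ℝ) (H : ℕ)
    (hT : ∀ s a s', 0 ≤ T s a s') (hTsum : ∀ s a, ∑ s' : S, T s a s' = 1)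
    (hγ0 : 0 ≤ γ) (hγ1 : γ ≤ 1) (hH : 1 ≤ H)
    (π : ℕ → S → A → ℝ)
    (hπpos : ∀ t < H, ∀ s a, 0 < π t s a)
    (hπsum : ∀ t < H, ∀ s, ∑ a : A, π t s a = 1) :
    ∃ kstar : ℕ, kstar ≤ H ∧
      greedy T γ π H kstar = 0 ∧ (∀ i < kstar, greedy T γ π H i ≠ 0) ∧
      (∀ i < kstar, greedy T γ π H (i + 1) < greedy T γ π H i ∧
        Feasible T γ π (greedy T γ π H (i + 1)) (greedy T γ π H i)) ∧
      (∀ k : ℕ, 1 ≤ k → ∀ s : ℕ → ℕ, s 0 = H → s k = 0 →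
        (∀ i < k, s (i + 1) < s i) →
        (∀ i < k, Feasible T γ π (s (i + 1)) (s i)) →
        kstar ≤ k) := by
  obtain ⟨kstar, hle, hzero, hpos, hgreedy, hmin⟩ := stmt10_general
    (isGreedySwitchSeq_greedy T γ π H) (Feasible.antitone T γ π) (feasible_succ T γ π)
  exact ⟨kstar, hle, hzero, hpos, hgreedy, fun k _ s h0 hk _ hs => hmin k s h0 hk hs⟩
end

section
/- Let π be a positive policy and k ≥ 1. There exists a time-varying reward r : {0,…,H−1} × S × A → ℝ whose soft-optimal policy equals π and which has at most k − 1 switches (i.e., the number of indices t ∈ {0,…,H−2} with r_{t+1} ≠ r_t is at most k − 1) if and only if there exist k' ≤ k and natural numbers s_0 = H > s_1 > … > s_{k'} = 0 such that every interval [s_{i+1}, s_i), 0 ≤ i < k', is feasible for π. -/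
/-!
A reward `r` has soft-optimal policy `π` exactly when `r_t = log π_t - γ T ν_{t+1} + ν_t` for some
potentials `ν` with `ν_H = 0`; the potentials are then the soft value functions. Reading this
equation on a block of times where `r` is constant gives a time-invariant certificate. Conversely,
adding one function of the state to all potentials of a block keeps the induced reward constant
there and moves the terminal value anywhere, so certificates on consecutive blocks can be made to
agree at the breakpoints and glued, starting from `ν_H = 0` and going backward in time.
-/

section Partition

variable {P Q : ℕ → ℕ → Prop} {s : ℕ → ℕ} {k i j H : ℕ}

/-- A partition of the times `{0, …, H - 1}` into `k` nonempty blocks `[s (i + 1), s i)`, listed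
from the last block to the first, all of which have the property `P` of their endpoints. -/
def IsPartition (P : ℕ → ℕ → Prop) (s : ℕ → ℕ) (k H : ℕ) : Prop :=
  s 0 = H ∧ s k = 0 ∧ (∀ i < k, s (i + 1) < s i) ∧ ∀ i < k, P (s (i + 1)) (s i)

namespace IsPartition

theorem apply_zero (h : IsPartition P s k H) : s 0 = H := h.1

theorem apply_last (h : IsPartition P s k H) : s k = 0 := h.2.1

theorem apply_succ_lt (h : IsPartition P s k H) (hi : i < k) : s (i + 1) < s i := h.2.2.1 i hi

theorem prop_block (h : IsPartition P s k H) (hi : i < k) : P (s (i + 1)) (s i) := h.2.2.2 i hi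

theorem empty : IsPartition P (fun _ => 0) 0 0 :=
  ⟨rfl, rfl, fun _ hi => absurd hi (Nat.not_lt_zero _), fun _ hi => absurd hi (Nat.not_lt_zero _)⟩

theorem cons (h : IsPartition P s k i) (hij : i < j) (hP : P i j) :
    IsPartition P (fun n => Nat.casesOn n j s) (k + 1) j := by
  obtain ⟨rfl, hsk, hs, hPs⟩ := h
  refine ⟨rfl, hsk, ?_, ?_⟩
  · rintro (_ | n) hn
    · exact hij
    · exact hs n (by omega)
  · rintro (_ | n) hn
    · exact hP
    · exact hPs n (by omega)

theorem tail (h : IsPartition P s (k + 1) H) : IsPartition P (fun n => s (n + 1)) k (s 1) :=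
  ⟨rfl, h.apply_last, fun _ hn => h.apply_succ_lt (by omega), fun _ hn => h.prop_block (by omega)⟩

theorem apply_le (h : IsPartition P s k H) (hi : i ≤ k) : s i ≤ H :=
  h.apply_zero ▸ (strictAntiOn_Iic_of_succ_lt fun _ => h.apply_succ_lt).antitoneOn
    (Set.mem_Iic.2 k.zero_le) (Set.mem_Iic.2 hi) i.zero_le

theorem mono (h : IsPartition P s k H) (hPQ : ∀ i j, j ≤ H → P i j → Q i j) :
    IsPartition Q s k H :=
  ⟨h.apply_zero, h.apply_last, fun _ => h.apply_succ_lt,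
    fun _ hi => hPQ _ _ (h.apply_le hi.le) (h.prop_block hi)⟩

theorem exists_mem_block (h : IsPartition P s k H) {t : ℕ} (ht : t < H) :
    ∃ i < k, t ∈ Set.Ico (s (i + 1)) (s i) := by
  induction k generalizing s H with
  | zero => exact absurd (h.apply_zero.symm.trans h.apply_last ▸ ht) (Nat.not_lt_zero t)
  | succ k ih =>
    rcases lt_or_ge t (s 1) with hlt | hge
    · obtain ⟨i, hi, hmem⟩ := ih h.tail hlt
      exact ⟨i + 1, by omega, hmem⟩
    · exact ⟨0, k.succ_pos, hge, h.apply_zero.symm ▸ ht⟩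

end IsPartition

end Partition

section Switches

variable {X : Type*} {r : ℕ → X} {H : ℕ}

/-- The times `t` at which a sequence with index set `{0, …, H - 1}` changes its value between `t`
and `t + 1`. -/
def switchTimes (r : ℕ → X) (H : ℕ) : Set ℕ :=
  {t | t + 1 < H ∧ r (t + 1) ≠ r t}

/-- The sequence `r` is constant on the block of times `[i, j)`. -/
def IsConstOn (r : ℕ → X) (i j : ℕ) : Prop :=
  ∃ x, ∀ t ∈ Set.Ico i j, r t = x

theorem isConstOn_singleton (r : ℕ → X) (i : ℕ) : IsConstOn r i (i + 1) :=
  ⟨r i, fun t ht => congrArg r (by grind)⟩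

theorem IsConstOn.extend {i m : ℕ} (h : IsConstOn r i (m + 1)) (him : i ≤ m)
    (hr : r (m + 1) = r m) : IsConstOn r i (m + 2) := by
  obtain ⟨x, hx⟩ := h
  refine ⟨x, fun t ⟨hit, htm⟩ => ?_⟩
  rcases Nat.lt_succ_iff_lt_or_eq.1 htm with hlt | rfl
  · exact hx t ⟨hit, hlt⟩
  · exact hr.trans (hx m ⟨him, m.lt_succ_self⟩)

theorem switchTimes_finite (r : ℕ → X) (H : ℕ) : (switchTimes r H).Finite :=
  (Set.finite_Iio H).subset fun _ ht => Nat.lt_of_succ_lt ht.1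

theorem switchTimes_mono (r : ℕ → X) : Monotone (switchTimes r) :=
  fun _ _ hHH' _ ht => ⟨ht.1.trans_le hHH', ht.2⟩

theorem exists_isPartition_isConstOn (r : ℕ → X) (m : ℕ) :
    ∃ k ≤ (switchTimes r (m + 1)).ncard + 1, ∃ s, IsPartition (IsConstOn r) s k (m + 1) := by
  induction m with
  | zero => exact ⟨1, by omega, _, IsPartition.empty.cons one_pos (isConstOn_singleton r 0)⟩
  | succ m ih =>
    obtain ⟨k, hk, s, hs⟩ := ih
    have hsub : switchTimes r (m + 1) ⊆ switchTimes r (m + 1 + 1) :=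
      switchTimes_mono r (m + 1).le_succ
    by_cases hr : r (m + 1) = r m
    · rcases k with _ | k
      · exact absurd (hs.apply_zero.symm.trans hs.apply_last) m.succ_ne_zero
      have hs1 : s 1 < m + 1 := hs.apply_zero ▸ hs.apply_succ_lt k.succ_pos
      have hlast : IsConstOn r (s 1) (m + 1) := hs.apply_zero ▸ hs.prop_block k.succ_pos
      have hcard := Set.ncard_le_ncard hsub (switchTimes_finite r (m + 1 + 1))
      exact ⟨k + 1, by omega, _,
        hs.tail.cons (by omega) (hlast.extend (Nat.le_of_lt_succ hs1) hr)⟩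
    · have hm : m ∈ switchTimes r (m + 1 + 1) \ switchTimes r (m + 1) :=
        ⟨⟨by omega, hr⟩, fun h => lt_irrefl _ h.1⟩
      have hcard := Set.ncard_lt_ncard (hsub.ssubset_of_mem_notMem hm.1 hm.2)
        (switchTimes_finite r (m + 1 + 1))
      exact ⟨k + 1, by omega, _, hs.cons (m + 1).lt_succ_self (isConstOn_singleton r (m + 1))⟩

theorem IsPartition.switchTimes_subset {s : ℕ → ℕ} {k : ℕ}
    (h : IsPartition (IsConstOn r) s k H) :
    switchTimes r H ⊆ (fun i => s i - 1) '' Set.Ico 1 k := by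
  rintro t ⟨htH, hne⟩
  obtain ⟨i, hi, hit, hti⟩ := h.exists_mem_block (Nat.lt_of_succ_lt htH)
  obtain ⟨x, hx⟩ := h.prop_block hi
  have hend : t + 1 = s i := by
    by_contra hlt
    exact hne ((hx (t + 1) ⟨by omega, by omega⟩).trans (hx t ⟨hit, hti⟩).symm)
  have hi0 : i ≠ 0 := by
    rintro rfl
    exact htH.ne (hend.trans h.apply_zero)
  exact ⟨i, ⟨Nat.one_le_iff_ne_zero.2 hi0, hi⟩, by dsimp only; omega⟩

theorem IsPartition.ncard_switchTimes_le {s : ℕ → ℕ} {k : ℕ}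
    (h : IsPartition (IsConstOn r) s k H) : (switchTimes r H).ncard ≤ k - 1 :=
  calc (switchTimes r H).ncard
      ≤ ((fun i => s i - 1) '' Set.Ico 1 k).ncard :=
        Set.ncard_le_ncard h.switchTimes_subset ((Set.finite_Ico 1 k).image _)
    _ ≤ (Set.Ico 1 k).ncard := Set.ncard_image_le (Set.finite_Ico 1 k)
    _ = k - 1 := by rw [← Finset.coe_Ico, Set.ncard_coe_finset, Nat.card_Ico]

theorem ncard_switchTimes_le_iff {k : ℕ} (hk : 1 ≤ k) :
    (switchTimes r H).ncard ≤ k - 1 ↔ ∃ k' ≤ k, ∃ s, IsPartition (IsConstOn r) s k' H := by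
  constructor
  · intro hcard
    rcases H with _ | m
    · exact ⟨0, k.zero_le, _, IsPartition.empty⟩
    · obtain ⟨k', hk', s, hs⟩ := exists_isPartition_isConstOn r m
      exact ⟨k', by omega, s, hs⟩
  · rintro ⟨k', hk', s, hs⟩
    exact hs.ncard_switchTimes_le.trans (Nat.sub_le_sub_right hk' 1)

end Switches

section SoftBellman

variable {S A : Type*} [Fintype S] {T : S → A → S → ℝ} {γ : ℝ} {π : ℕ → S → A → ℝ}
  {r r' : ℕ → S → A → ℝ} {ν ν' : ℕ → S → ℝ} {i j m : ℕ}

/-- The potentials `ν` solve the soft Bellman equation of the reward `r` and the policy `π` on the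
times `[i, j)`. This is the equation of `IsCert`, with a reward that may vary in time. -/
def SoftBellman (T : S → A → S → ℝ) (γ : ℝ) (π r : ℕ → S → A → ℝ) (ν : ℕ → S → ℝ) (i j : ℕ) :
    Prop :=
  ∀ t ∈ Set.Ico i j, ∀ s a,
    r t s a = Real.log (π t s a) - γ * (∑ s' : S, T s a s' * ν (t + 1) s') + ν t s

theorem isCert_iff_softBellman {νo : S → ℝ} {ρ : S → A → ℝ} :
    IsCert T γ π i j νo ρ ν ↔ ν j = νo ∧ SoftBellman T γ π (fun _ => ρ) ν i j := by
  simp only [IsCert, SoftBellman, funext_iff, Set.mem_Ico, and_imp]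

namespace SoftBellman

theorem congr (h : SoftBellman T γ π r ν i j) (hr : ∀ t ∈ Set.Ico i j, r t = r' t) :
    SoftBellman T γ π r' ν i j :=
  fun t ht => hr t ht ▸ h t ht

theorem mono {i' j' : ℕ} (h : SoftBellman T γ π r ν i j) (hi : i ≤ i') (hj : j' ≤ j) :
    SoftBellman T γ π r ν i' j' :=
  fun t ht => h t (Set.Ico_subset_Ico hi hj ht)

theorem add_const (h : SoftBellman T γ π r ν i j) (c : S → ℝ) :
    SoftBellman T γ π (fun t s a => r t s a + (c s - γ * ∑ s' : S, T s a s' * c s'))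
      (fun t => ν t + c) i j := by
  intro t ht s a
  simp only [h t ht s a, Pi.add_apply, mul_add, Finset.sum_add_distrib]
  ring

theorem glue (h : SoftBellman T γ π r ν i m) (h' : SoftBellman T γ π r' ν' m j)
    (hm : ν m = ν' m) :
    SoftBellman T γ π (fun t => if t < m then r t else r' t)
      (fun t => if t < m then ν t else ν' t) i j := by
  rintro t ⟨hit, htj⟩ s a
  rcases lt_or_ge t m with htm | hmt
  · have hnext : (if t + 1 < m then ν (t + 1) else ν' (t + 1)) = ν (t + 1) := by
      split_ifs with hlt
      · rfl
      · obtain rfl : t + 1 = m := by omega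
        exact hm.symm
    simp only [if_pos htm, hnext]
    exact h t ⟨hit, htm⟩ s a
  · simp only [if_neg hmt.not_gt, if_neg (hmt.trans t.le_succ).not_gt]
    exact h' t ⟨hmt, htj⟩ s a

theorem feasible (h : SoftBellman T γ π r ν i j) (hr : IsConstOn r i j) :
    Feasible T γ π i j := by
  obtain ⟨ρ, hρ⟩ := hr
  exact ⟨ν j, ρ, ν, isCert_iff_softBellman.2 ⟨rfl, h.congr hρ⟩⟩

end SoftBellman

theorem Feasible.exists_softBellman (h : Feasible T γ π i j) (νo : S → ℝ) :
    ∃ ρ ν, ν j = νo ∧ SoftBellman T γ π (fun _ => ρ) ν i j := by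
  obtain ⟨_, ρ, ν, hcert⟩ := h
  obtain ⟨-, hν⟩ := isCert_iff_softBellman.1 hcert
  exact ⟨_, fun t => ν t + (νo - ν j), add_sub_cancel (ν j) νo, hν.add_const (νo - ν j)⟩

theorem IsPartition.exists_softBellman {s : ℕ → ℕ} {k H : ℕ}
    (h : IsPartition (Feasible T γ π) s k H) (νo : S → ℝ) :
    ∃ r ν, ν H = νo ∧ SoftBellman T γ π r ν 0 H ∧ IsPartition (IsConstOn r) s k H := by
  induction k generalizing s H νo with
  | zero =>
    obtain rfl : H = 0 := h.apply_zero.symm.trans h.apply_last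
    exact ⟨0, fun _ => νo, rfl, fun t ht => absurd ht.2 t.not_lt_zero, h.apply_zero, h.apply_last,
      fun _ => h.apply_succ_lt, fun i hi => absurd hi i.not_lt_zero⟩
  | succ k ih =>
    obtain rfl := h.apply_zero
    obtain ⟨ρ, μ, hμ, hρ⟩ := (h.prop_block k.succ_pos).exists_softBellman νo
    obtain ⟨r, ν, hν, hr, hblocks⟩ := ih h.tail (μ (s 1))
    refine ⟨_, _, ?_, hr.glue hρ hν, rfl, h.apply_last,
      fun _ => h.apply_succ_lt, ?_⟩
    · rwa [if_neg (h.apply_succ_lt k.succ_pos).not_gt]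
    · rintro (_ | i) hi
      · exact ⟨ρ, fun t ht => if_neg ht.1.not_gt⟩
      · obtain ⟨x, hx⟩ := hblocks.prop_block (Nat.lt_of_succ_lt_succ hi)
        have hle : s (i + 1) ≤ s 1 := hblocks.apply_le (by omega)
        exact ⟨x, fun t ht => (if_pos (ht.2.trans_le hle)).trans (hx t ht)⟩

end SoftBellman

section SoftOptimality

variable {S A : Type*} [Fintype S] [Fintype A] {T : S → A → S → ℝ} {γ : ℝ} {H : ℕ}
  {r π : ℕ → S → A → ℝ} {ν : ℕ → S → ℝ}

/-- The soft value functions of a problem with horizon `H`, including the terminal value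
`V_H = 0`, so that one recursion describes the soft Q-functions at all times `t < H`. -/
noncomputable def softValue (T : S → A → S → ℝ) (γ : ℝ) (H : ℕ) (r : ℕ → S → A → ℝ) (t : ℕ) :
    S → ℝ :=
  if t < H then softV T γ H r t else 0

theorem softQ_eq_add_softValue {t : ℕ} (ht : t < H) (s : S) (a : A) :
    softQ T γ H r t s a = r t s a + γ * ∑ s' : S, T s a s' * softValue T γ H r (t + 1) s' := by
  rcases Nat.lt_or_ge (t + 1) H with hlt | hge
  · have hsteps : H - 1 - t = H - 1 - (t + 1) + 1 := by omega
    have htime : H - 1 - (H - 1 - (t + 1) + 1) = t := by omega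
    simp only [softValue, if_pos hlt, softV, softQ]
    rw [hsteps, Qaux, htime]
  · obtain rfl : H = t + 1 := by omega
    simp [softQ, Qaux, softValue]

theorem log_softPolicy (t : ℕ) (s : S) (a : A) :
    Real.log (softPolicy T γ H r t s a) = softQ T γ H r t s a - softV T γ H r t s := by
  have hsum : 0 < ∑ a' : A, Real.exp (softQ T γ H r t s a') :=
    Finset.sum_pos (fun _ _ => Real.exp_pos _) ⟨a, Finset.mem_univ a⟩
  rw [softPolicy, Real.log_div (Real.exp_ne_zero _) hsum.ne', Real.log_exp, softV]

theorem softBellman_softValue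
    (hπ : ∀ t < H, ∀ s a, softPolicy T γ H r t s a = π t s a) :
    SoftBellman T γ π r (softValue T γ H r) 0 H := by
  rintro t ⟨-, ht⟩ s a
  have hV : softValue T γ H r t s = softV T γ H r t s := by rw [softValue, if_pos ht]
  rw [← hπ t ht, log_softPolicy, hV, softQ_eq_add_softValue ht]
  ring

theorem sum_exp_log_add {p : A → ℝ} (hpos : ∀ a, 0 < p a) (hsum : ∑ a, p a = 1) (c : ℝ) :
    ∑ a, Real.exp (Real.log (p a) + c) = Real.exp c := by
  simp only [Real.exp_add, Real.exp_log (hpos _), ← Finset.sum_mul, hsum, one_mul]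

namespace SoftBellman

theorem softQ_eq (h : SoftBellman T γ π r ν 0 H) {t : ℕ} (ht : t < H)
    (hnext : softValue T γ H r (t + 1) = ν (t + 1)) (s : S) (a : A) :
    softQ T γ H r t s a = Real.log (π t s a) + ν t s := by
  rw [softQ_eq_add_softValue ht, hnext, h t ⟨t.zero_le, ht⟩]
  ring

theorem softValue_eq (h : SoftBellman T γ π r ν 0 H) (hν : ν H = 0)
    (hπpos : ∀ t < H, ∀ s a, 0 < π t s a) (hπsum : ∀ t < H, ∀ s, ∑ a, π t s a = 1)
    {t : ℕ} (ht : t ≤ H) : softValue T γ H r t = ν t := by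
  induction ht using Nat.decreasingInduction with
  | self => rw [softValue, if_neg (lt_irrefl H), hν]
  | of_succ t ht hnext =>
    funext s
    simp only [softValue, if_pos ht, softV, h.softQ_eq ht hnext,
      sum_exp_log_add (hπpos t ht s) (hπsum t ht s), Real.log_exp]

theorem softPolicy_eq (h : SoftBellman T γ π r ν 0 H) (hν : ν H = 0)
    (hπpos : ∀ t < H, ∀ s a, 0 < π t s a) (hπsum : ∀ t < H, ∀ s, ∑ a, π t s a = 1)
    {t : ℕ} (ht : t < H) (s : S) (a : A) : softPolicy T γ H r t s a = π t s a := by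
  simp only [softPolicy, h.softQ_eq ht (h.softValue_eq hν hπpos hπsum ht),
    sum_exp_log_add (hπpos t ht s) (hπsum t ht s)]
  rw [Real.exp_add, Real.exp_log (hπpos t ht s a), mul_div_cancel_right₀ _ (Real.exp_ne_zero _)]

end SoftBellman

theorem softPolicy_eq_iff_exists_softBellman
    (hπpos : ∀ t < H, ∀ s a, 0 < π t s a) (hπsum : ∀ t < H, ∀ s, ∑ a, π t s a = 1) :
    (∀ t < H, ∀ s a, softPolicy T γ H r t s a = π t s a) ↔
      ∃ ν, ν H = 0 ∧ SoftBellman T γ π r ν 0 H :=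
  ⟨fun hπ => ⟨softValue T γ H r, if_neg (lt_irrefl H), softBellman_softValue hπ⟩,
    fun ⟨_, hν, h⟩ _ ht => h.softPolicy_eq hν hπpos hπsum ht⟩

end SoftOptimality

theorem stmt11_general {S A : Type*} [Fintype S] [Fintype A]
    (T : S → A → S → ℝ) (γ : ℝ) (H : ℕ) (π : ℕ → S → A → ℝ)
    (hπpos : ∀ t < H, ∀ s a, 0 < π t s a)
    (hπsum : ∀ t < H, ∀ s, ∑ a : A, π t s a = 1)
    (k : ℕ) (hk : 1 ≤ k) :
    (∃ r : ℕ → S → A → ℝ,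
      (∀ t < H, ∀ s a, softPolicy T γ H r t s a = π t s a) ∧
      (switchTimes r H).ncard ≤ k - 1) ↔
    ∃ k' ≤ k, ∃ s : ℕ → ℕ, IsPartition (Feasible T γ π) s k' H := by
  simp only [softPolicy_eq_iff_exists_softBellman hπpos hπsum, ncard_switchTimes_le_iff hk]
  constructor
  · rintro ⟨r, ⟨ν, -, hν⟩, k', hk', s, hs⟩
    exact ⟨k', hk', s, hs.mono fun i j hj hr => (hν.mono i.zero_le hj).feasible hr⟩
  · rintro ⟨k', hk', s, hs⟩
    obtain ⟨r, ν, hνH, hν, hr⟩ := hs.exists_softBellman 0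
    exact ⟨r, ⟨ν, hνH, hν⟩, k', hk', s, hr⟩

/-- there is a time-varying reward whose soft-optimal policy is `π`
with at most `k − 1` switches iff there is a partition of `{0,…,H−1}` into
`k' ≤ k` intervals, each feasible for `π`. -/
theorem stmt11 {S A : Type*} [Fintype S] [Fintype A] [Nonempty S] [Nonempty A]
    (T : S → A → S → ℝ) (γ : ℝ) (H : ℕ)
    (hT : ∀ s a s', 0 ≤ T s a s') (hTsum : ∀ s a, ∑ s' : S, T s a s' = 1)
    (hγ0 : 0 ≤ γ) (hγ1 : γ ≤ 1) (hH : 1 ≤ H)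
    (π : ℕ → S → A → ℝ)
    (hπpos : ∀ t < H, ∀ s a, 0 < π t s a)
    (hπsum : ∀ t < H, ∀ s, ∑ a : A, π t s a = 1)
    (k : ℕ) (hk : 1 ≤ k) :
    (∃ r : ℕ → S → A → ℝ,
      (∀ t < H, ∀ s a, softPolicy T γ H r t s a = π t s a) ∧
      {t : ℕ | t + 1 < H ∧ r (t + 1) ≠ r t}.ncard ≤ k - 1) ↔
    (∃ k' ≤ k, ∃ s : ℕ → ℕ, s 0 = H ∧ s k' = 0 ∧
      (∀ i < k', s (i + 1) < s i) ∧
      ∀ i < k', Feasible T γ π (s (i + 1)) (s i)) :=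
  stmt11_general T γ H π hπpos hπsum k hk
end

section
/- Let A be a nonempty finite set, p a strictly positive probability mass function on A, n ≥ 1, δ ∈ (0,1), and ε = sqrt((1/(2n)) · log(2/(1−δ))). Fix a ∈ A and α ∈ ℝ with ε < α ≤ p(a). Then, with respect to the product measure of n i.i.d. samples from p, the probability of the event { |log p̂(a) − log p(a)| ≤ ε/(α − ε) } is at least δ, where p̂(a) = (1/n) Σ_{i=1}^n 1[a_i = a] is the empirical frequency of a among the samples a_1, …, a_n. (Lemma 4 of the paper.) -/
open MeasureTheory

open ProbabilityTheory

/-!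
By Hoeffding's inequality the empirical mean of `n` independent `[0, 1]`-valued variables deviates
from its expectation by at least `ε` with probability at most `2 exp (-2 n ε²)`, and
`ε = √(log (2 / (1 - δ)) / (2 n))` is the radius at which this bound equals `1 - δ`. When the
deviation is below `ε < α ≤ m`, the empirical mean and its expectation `m` both lie in
`[α - ε, ∞)`, where `log` is Lipschitz with constant `1 / (α - ε)`.
-/

theorem log_sub_log_le_sub_div {x y : ℝ} (hx : 0 < x) (hy : 0 < y) :
    Real.log x - Real.log y ≤ (x - y) / y := by
  rw [← Real.log_div hx.ne' hy.ne', sub_div, div_self hy.ne']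
  exact Real.log_le_sub_one_of_pos (div_pos hx hy)

theorem abs_log_sub_log_le_abs_sub_div {c x y : ℝ} (hc : 0 < c) (hx : c ≤ x) (hy : c ≤ y) :
    |Real.log x - Real.log y| ≤ |x - y| / c := by
  have one_sided {u v : ℝ} (hu : c ≤ u) (hv : c ≤ v) :
      Real.log u - Real.log v ≤ |u - v| / c :=
    calc Real.log u - Real.log v
      _ ≤ (u - v) / v := log_sub_log_le_sub_div (hc.trans_le hu) (hc.trans_le hv)
      _ ≤ |u - v| / c := by gcongr; exact le_abs_self _
  exact abs_sub_le_iff.2 ⟨one_sided hx hy, abs_sub_comm x y ▸ one_sided hy hx⟩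

section Hoeffding

variable {Ω ι : Type*} [MeasurableSpace Ω] {P : Measure Ω}

theorem measureReal_abs_ge_le_of_hasSubgaussianMGF {X : Ω → ℝ} {c : NNReal}
    (hX : HasSubgaussianMGF X c P) {t : ℝ} (ht : 0 ≤ t) :
    P.real {ω | t ≤ |X ω|} ≤ 2 * Real.exp (-t ^ 2 / (2 * c)) :=
  calc P.real {ω | t ≤ |X ω|}
    _ = P.real ({ω | t ≤ X ω} ∪ {ω | t ≤ -X ω}) := by simp only [le_abs, Set.ofPred_or]
    _ ≤ P.real {ω | t ≤ X ω} + P.real {ω | t ≤ -X ω} := measureReal_union_le _ _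
    _ ≤ Real.exp (-t ^ 2 / (2 * c)) + Real.exp (-t ^ 2 / (2 * c)) :=
      add_le_add (hX.measure_ge_le ht) (hX.neg.measure_ge_le ht)
    _ = 2 * Real.exp (-t ^ 2 / (2 * c)) := (two_mul _).symm

theorem measureReal_abs_sum_sub_integral_ge_le_of_iIndepFun {X : ι → Ω → ℝ}
    (hindep : iIndepFun X P) {s : Finset ι} {a b : ι → ℝ}
    (hX : ∀ i ∈ s, AEMeasurable (X i) P) (hbdd : ∀ i ∈ s, ∀ᵐ ω ∂P, X i ω ∈ Set.Icc (a i) (b i))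
    {t : ℝ} (ht : 0 ≤ t) :
    P.real {ω | t ≤ |∑ i ∈ s, (X i ω - P[X i])|}
      ≤ 2 * Real.exp (-2 * t ^ 2 / ∑ i ∈ s, (b i - a i) ^ 2) := by
  have : IsProbabilityMeasure P := hindep.isProbabilityMeasure
  have hindep_centered : iIndepFun (fun i ω ↦ X i ω - P[X i]) P :=
    hindep.comp (fun i (x : ℝ) ↦ x - ∫ ω, X i ω ∂P) fun _ ↦ measurable_id.sub_const _
  have hsum := HasSubgaussianMGF.sum_of_iIndepFun hindep_centered fun i hi ↦
    hasSubgaussianMGF_of_mem_Icc (hX i hi) (hbdd i hi)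
  have hvar : 2 * ((∑ i ∈ s, (‖b i - a i‖₊ / 2) ^ 2 : NNReal) : ℝ)
      = (∑ i ∈ s, (b i - a i) ^ 2) / 2 := by
    push_cast
    simp only [Real.norm_eq_abs, div_pow, sq_abs, ← Finset.sum_div]
    ring
  calc P.real {ω | t ≤ |∑ i ∈ s, (X i ω - P[X i])|}
    _ ≤ 2 * Real.exp (-t ^ 2 / ((∑ i ∈ s, (b i - a i) ^ 2) / 2)) :=
      hvar ▸ measureReal_abs_ge_le_of_hasSubgaussianMGF hsum ht
    _ = 2 * Real.exp (-2 * t ^ 2 / ∑ i ∈ s, (b i - a i) ^ 2) := by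
      rw [div_div_eq_mul_div]
      ring_nf

theorem measureReal_abs_average_sub_integral_ge_le_of_iIndepFun {n : ℕ} {X : Fin n → Ω → ℝ}
    (hindep : iIndepFun X P) {a b : ℝ} (hX : ∀ i, AEMeasurable (X i) P)
    (hbdd : ∀ i, ∀ᵐ ω ∂P, X i ω ∈ Set.Icc a b) {ε : ℝ} (hε : 0 ≤ ε) :
    P.real {ω | ε ≤ |1 / (n : ℝ) * ∑ i, X i ω - 1 / (n : ℝ) * ∑ i, P[X i]|}
      ≤ 2 * Real.exp (-2 * n * ε ^ 2 / (b - a) ^ 2) := by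
  have : IsProbabilityMeasure P := hindep.isProbabilityMeasure
  have hscale (ω : Ω) : n * |1 / (n : ℝ) * ∑ i, X i ω - 1 / (n : ℝ) * ∑ i, P[X i]|
      = |∑ i, (X i ω - P[X i])| := by
    rcases eq_or_ne n 0 with rfl | hn
    · simp
    · rw [← mul_sub, ← Finset.sum_sub_distrib, abs_mul, abs_of_nonneg (by positivity)]
      field_simp
  calc P.real {ω | ε ≤ |1 / (n : ℝ) * ∑ i, X i ω - 1 / (n : ℝ) * ∑ i, P[X i]|}
    _ ≤ P.real {ω | n * ε ≤ |∑ i, (X i ω - P[X i])|} :=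
      measureReal_mono fun ω hω ↦
        (mul_le_mul_of_nonneg_left hω n.cast_nonneg).trans_eq (hscale ω)
    _ ≤ 2 * Real.exp (-2 * (n * ε) ^ 2 / ∑ _i : Fin n, (b - a) ^ 2) :=
      measureReal_abs_sum_sub_integral_ge_le_of_iIndepFun hindep (fun i _ ↦ hX i)
        (fun i _ ↦ hbdd i) (by positivity)
    _ = 2 * Real.exp (-2 * n * ε ^ 2 / (b - a) ^ 2) := by
      rcases eq_or_ne n 0 with rfl | _
      · simp
      · rw [Finset.sum_const, Finset.card_univ, Fintype.card_fin, nsmul_eq_mul]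
        field_simp

-- The square root is truncated at `0` when `δ < -1`, which makes this an inequality.
theorem two_mul_exp_neg_two_mul_sq_sqrt_le {n : ℕ} (hn : 1 ≤ n) {δ : ℝ} (hδ : δ < 1) :
    2 * Real.exp (-2 * n * √(1 / (2 * (n : ℝ)) * Real.log (2 / (1 - δ))) ^ 2) ≤ 1 - δ := by
  have hδ' : 0 < 1 - δ := sub_pos.2 hδ
  have hn' : (0 : ℝ) < n := by exact_mod_cast hn
  calc 2 * Real.exp (-2 * n * √(1 / (2 * (n : ℝ)) * Real.log (2 / (1 - δ))) ^ 2)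
    _ ≤ 2 * Real.exp (-2 * n * (1 / (2 * (n : ℝ)) * Real.log (2 / (1 - δ)))) := by
      have hsq := Real.sq_sqrt' ▸ le_max_left (1 / (2 * (n : ℝ)) * Real.log (2 / (1 - δ))) 0
      gcongr 2 * Real.exp ?_
      exact mul_le_mul_of_nonpos_left hsq (by linarith)
    _ = 2 * Real.exp (-Real.log (2 / (1 - δ))) := by
      congr 2
      field_simp
    _ = 1 - δ := by
      rw [Real.exp_neg, Real.exp_log (by positivity)]
      field_simp

theorem le_measureReal_abs_average_sub_integral_lt_sqrt {n : ℕ} (hn : 1 ≤ n) {X : Fin n → Ω → ℝ}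
    (hindep : iIndepFun X P) (hX : ∀ i, AEMeasurable (X i) P)
    (hX01 : ∀ i, ∀ᵐ ω ∂P, X i ω ∈ Set.Icc 0 1) {δ : ℝ} (hδ : δ < 1) :
    δ ≤ P.real {ω | |1 / (n : ℝ) * ∑ i, X i ω - 1 / (n : ℝ) * ∑ i, P[X i]|
      < √(1 / (2 * (n : ℝ)) * Real.log (2 / (1 - δ)))} := by
  have : IsProbabilityMeasure P := hindep.isProbabilityMeasure
  set ε := √(1 / (2 * (n : ℝ)) * Real.log (2 / (1 - δ)))
  set dev := fun ω ↦ |1 / (n : ℝ) * ∑ i, X i ω - 1 / (n : ℝ) * ∑ i, P[X i]|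
  have htail : P.real {ω | ε ≤ dev ω} ≤ 1 - δ :=
    calc P.real {ω | ε ≤ dev ω}
      _ ≤ 2 * Real.exp (-2 * n * ε ^ 2) := by
        simpa only [sub_zero, one_pow, div_one] using
          measureReal_abs_average_sub_integral_ge_le_of_iIndepFun hindep hX hX01
            (Real.sqrt_nonneg _)
      _ ≤ 1 - δ := two_mul_exp_neg_two_mul_sq_sqrt_le hn hδ
  have hcover : 1 ≤ P.real {ω | dev ω < ε} + P.real {ω | ε ≤ dev ω} :=
    calc 1 = P.real ({ω | dev ω < ε} ∪ {ω | ε ≤ dev ω}) := by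
          simp only [← Set.ofPred_or, lt_or_ge, Set.ofPred_true, probReal_univ]
      _ ≤ _ := measureReal_union_le _ _
  linarith

end Hoeffding

theorem le_measureReal_abs_log_average_sub_log_le_of_iIndepFun {Ω : Type*} [MeasurableSpace Ω]
    {P : Measure Ω} {n : ℕ} (hn : 1 ≤ n) {X : Fin n → Ω → ℝ} (hindep : iIndepFun X P)
    (hX : ∀ i, AEMeasurable (X i) P) (hX01 : ∀ i, ∀ᵐ ω ∂P, X i ω ∈ Set.Icc 0 1)
    {δ : ℝ} (hδ : δ < 1) {ε : ℝ} (hε : ε = √(1 / (2 * (n : ℝ)) * Real.log (2 / (1 - δ))))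
    {m : ℝ} (hm : 1 / (n : ℝ) * ∑ i, P[X i] = m) {α : ℝ} (hεα : ε < α) (hαm : α ≤ m) :
    δ ≤ P.real {ω | |Real.log (1 / (n : ℝ) * ∑ i, X i ω) - Real.log m| ≤ ε / (α - ε)} := by
  subst hε hm
  have : IsProbabilityMeasure P := hindep.isProbabilityMeasure
  refine (le_measureReal_abs_average_sub_integral_lt_sqrt hn hindep hX hX01 hδ).trans
    (measureReal_mono fun ω hdev ↦ ?_)
  simp only [Set.mem_ofPred_eq] at hdev ⊢
  set ε := √(1 / (2 * (n : ℝ)) * Real.log (2 / (1 - δ)))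
  have hε : 0 ≤ ε := Real.sqrt_nonneg _
  have hlower := (abs_lt.1 hdev).1
  refine (abs_log_sub_log_le_abs_sub_div (sub_pos.2 hεα) (by linarith) (by linarith)).trans ?_
  exact div_le_div_of_nonneg_right hdev.le (sub_pos.2 hεα).le

theorem integral_comp_eval_pi {ι E : Type*} [Fintype ι] [NormedAddCommGroup E] [NormedSpace ℝ E]
    {X : ι → Type*} [∀ i, MeasurableSpace (X i)] {μ : ∀ i, Measure (X i)}
    [∀ i, IsProbabilityMeasure (μ i)] {i : ι} {f : X i → E}
    (hf : AEStronglyMeasurable f (μ i)) :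
    ∫ x, f (x i) ∂Measure.pi μ = ∫ y, f y ∂μ i := by
  have heval := measurePreserving_eval μ i
  rw [← heval.map_eq] at hf ⊢
  exact (integral_map heval.aemeasurable hf).symm

section FiniteSupport

variable {ι X : Type*} [Fintype ι] [MeasurableSpace X] {w : ι → ℝ}

theorem isProbabilityMeasure_sum_ofReal_smul_dirac (hw : ∀ i, 0 ≤ w i) (hsum : ∑ i, w i = 1)
    (x : ι → X) :
    IsProbabilityMeasure (∑ i, ENNReal.ofReal (w i) • Measure.dirac (x i)) := by
  rw [← Measure.sum_fintype]
  exact (hsum ▸ hasSum_fintype w).isProbabilityMeasure_sum_dirac hw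

theorem integral_sum_ofReal_smul_dirac [MeasurableSingletonClass X] {E : Type*}
    [NormedAddCommGroup E] [NormedSpace ℝ E] [FiniteDimensional ℝ E] (hw : ∀ i, 0 ≤ w i)
    (x : ι → X) (f : X → E) :
    ∫ y, f y ∂(∑ i, ENNReal.ofReal (w i) • Measure.dirac (x i)) = ∑ i, w i • f (x i) := by
  rw [← Measure.sum_fintype, integral_sum_dirac fun _ ↦ ENNReal.ofReal_ne_top, tsum_fintype]
  simp only [ENNReal.toReal_ofReal (hw _)]

theorem integral_ite_eq_sum_ofReal_smul_dirac [MeasurableSpace ι] [MeasurableSingletonClass ι]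
    [DecidableEq ι] (hw : ∀ i, 0 ≤ w i) (i : ι) :
    ∫ j, (if j = i then (1 : ℝ) else 0) ∂(∑ j, ENNReal.ofReal (w j) • Measure.dirac j) = w i := by
  simp [integral_sum_ofReal_smul_dirac hw fun j ↦ j]

end FiniteSupport

theorem stmt12_general {Ω : Type*} [MeasurableSpace Ω] {μ : Measure Ω} [IsProbabilityMeasure μ]
    {f : Ω → ℝ} (hf : AEMeasurable f μ) (hf01 : ∀ᵐ x ∂μ, f x ∈ Set.Icc 0 1)
    {m : ℝ} (hm : ∫ x, f x ∂μ = m) {n : ℕ} (hn : 1 ≤ n) {δ : ℝ} (hδ : δ < 1)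
    {ε : ℝ} (hε : ε = √(1 / (2 * (n : ℝ)) * Real.log (2 / (1 - δ))))
    {α : ℝ} (hεα : ε < α) (hαm : α ≤ m) :
    ENNReal.ofReal δ ≤ Measure.pi (fun _ : Fin n ↦ μ)
      {ω | |Real.log (1 / (n : ℝ) * ∑ i, f (ω i)) - Real.log m| ≤ ε / (α - ε)} := by
  have heval (i : Fin n) := Measure.quasiMeasurePreserving_eval (fun _ : Fin n ↦ μ) i
  have hmean : 1 / (n : ℝ) * ∑ i : Fin n, ∫ ω, f (ω i) ∂Measure.pi (fun _ : Fin n ↦ μ) = m := by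
    have hterm (i : Fin n) : ∫ ω, f (ω i) ∂Measure.pi (fun _ : Fin n ↦ μ) = m :=
      (integral_comp_eval_pi (μ := fun _ : Fin n ↦ μ) hf.aestronglyMeasurable).trans hm
    simp only [hterm, Finset.sum_const, Finset.card_univ, Fintype.card_fin, nsmul_eq_mul]
    field_simp
  rw [ENNReal.ofReal_le_iff_le_toReal (measure_ne_top _ _)]
  exact le_measureReal_abs_log_average_sub_log_le_of_iIndepFun hn (iIndepFun_pi fun _ ↦ hf)
    (fun i ↦ hf.comp_quasiMeasurePreserving (heval i)) (fun i ↦ (heval i).ae hf01) hδ hε hmean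
    hεα hαm

/-- Lemma 4: for `n` i.i.d. samples from a strictly positive pmf
`p` on the nonempty finite set `A`, a fixed `a ∈ A`, and
`ε = sqrt((1/(2n)) log(2/(1−δ)))` with `ε < α ≤ p a`, the product measure of the
event `{ |log p̂(a) − log p(a)| ≤ ε/(α − ε) }` is at least `δ`, where
`p̂(a) = (1/n) Σ_i 1[aᵢ = a]`. -/
theorem stmt12 {A : Type*} [Fintype A] [Nonempty A] [DecidableEq A]
    [MeasurableSpace A] [MeasurableSingletonClass A]
    (p : A → ℝ) (hp : ∀ a, 0 < p a) (hpsum : ∑ a : A, p a = 1)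
    (n : ℕ) (hn : 1 ≤ n) (δ : ℝ) (hδ0 : 0 < δ) (hδ1 : δ < 1)
    (ε : ℝ) (hε : ε = Real.sqrt ((1 / (2 * (n : ℝ))) * Real.log (2 / (1 - δ))))
    (a : A) (α : ℝ) (hεα : ε < α) (hαp : α ≤ p a) :
    ENNReal.ofReal δ ≤
      Measure.pi (fun _ : Fin n => ∑ b : A, ENNReal.ofReal (p b) • Measure.dirac b)
        {ω : Fin n → A |
          |Real.log ((1 / (n : ℝ)) * ∑ i : Fin n, if ω i = a then (1 : ℝ) else 0)
            - Real.log (p a)| ≤ ε / (α - ε)} := by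
  have := isProbabilityMeasure_sum_ofReal_smul_dirac (fun b ↦ (hp b).le) hpsum fun b ↦ b
  exact stmt12_general (measurable_of_finite _).aemeasurable
    (ae_of_all _ fun x ↦ by split_ifs <;> simp)
    (integral_ite_eq_sum_ofReal_smul_dirac (fun b ↦ (hp b).le) a) hn hδ1 hε hεα hαp
end
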